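/- arXiv:0903.3395 — 2 statements merged into one kernel-verified Lean document; each statement's English description precedes it below -/
import Mathlib

section
/- There is an absolute constant C ≥ 1 such that for all positive integers m and n and every m-homogeneous polynomial P(z) = ∑_{|α|=m} a_α z^α on ℂ^n, one has (∑_{|α|=m} |a_α|^{2m/(m+1)})^{(m+1)/(2m)} ≤ C^m · sup_{z ∈ 𝔻^n} |∑_{|α|=m} a_α z^α|. (Hypercontractive Bohnenblust–Hille inequality for polynomials.) -/
open Finset

/-- Evaluation of the `m`-homogeneous polynomial on `ℂ^n` with coefficient family `a`
(indexed by the multi-indices `α` with `|α| = m`) at the point `z`. -/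
noncomputable def mhEval (n m : ℕ) (a : (Fin n → ℕ) → ℂ) (z : Fin n → ℂ) : ℂ :=
  ∑ α ∈ Finset.Nat.antidiagonalTuple n m, a α * ∏ i, z i ^ α i

/-- The supremum of `|P(z)|` over the open unit polydisc `𝔻^n`. -/
noncomputable def polydiscSup (n m : ℕ) (a : (Fin n → ℕ) → ℂ) : ℝ :=
  sSup {x : ℝ | ∃ z : Fin n → ℂ, (∀ i, ‖z i‖ < 1) ∧ x = ‖mhEval n m a z‖}

lemma bh_orth (N a b : ℕ) (ha : a < N) (hb : b < N) (ω : ℂ) (hω : IsPrimitiveRoot ω N) :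
    ∑ t : Fin N, (ω ^ (t : ℕ)) ^ a * (starRingEnd ℂ) ((ω ^ (t : ℕ)) ^ b)
      = if a = b then (N : ℂ) else 0 := by
  have hN : N ≠ 0 := by omega
  have hn : ‖ω‖ = 1 := hω.norm'_eq_one hN
  have hc : ω * (starRingEnd ℂ) ω = 1 := by
    rw [Complex.mul_conj, Complex.normSq_eq_norm_sq, hn]; simp
  have h1 : ∀ t : ℕ, (ω ^ t) ^ a * (starRingEnd ℂ) ((ω ^ t) ^ b)
      = (ω ^ a * (starRingEnd ℂ) ω ^ b) ^ t := by
    intro t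
    simp only [map_pow]
    rw [mul_pow, ← pow_mul, ← pow_mul, ← pow_mul, ← pow_mul, mul_comm a, mul_comm b]
  simp only [h1]
  rw [Fin.sum_univ_eq_sum_range (fun t => (ω ^ a * (starRingEnd ℂ) ω ^ b) ^ t) N]
  split_ifs with h
  · subst h
    rw [← mul_pow, hc]; simp
  · have hne : ω ^ a * (starRingEnd ℂ) ω ^ b ≠ 1 := by
      intro h2
      apply h
      apply hω.pow_inj ha hb
      calc ω ^ a = ω ^ a * (ω * (starRingEnd ℂ) ω) ^ b := by rw [hc]; simp
        _ = (ω ^ a * (starRingEnd ℂ) ω ^ b) * ω ^ b := by rw [mul_pow]; ring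
        _ = ω ^ b := by rw [h2, one_mul]
    rw [geom_sum_eq hne]
    have : (ω ^ a * (starRingEnd ℂ) ω ^ b) ^ N = 1 := by
      rw [mul_pow, ← pow_mul, ← pow_mul, mul_comm a, mul_comm b, pow_mul, pow_mul, ← map_pow,
        hω.pow_eq_one]; simp
    rw [this]; simp

lemma bh_parseval (n N : ℕ) (ω : ℂ) (hω : IsPrimitiveRoot ω N) (T : Finset (Fin n → ℕ))
    (hT : ∀ α ∈ T, ∀ i, α i < N) (b : (Fin n → ℕ) → ℂ) :
    ∑ k : Fin n → Fin N, ‖∑ α ∈ T, b α * ∏ i, (ω ^ (k i : ℕ)) ^ α i‖ ^ 2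
      = (N : ℝ) ^ n * ∑ α ∈ T, ‖b α‖ ^ 2 := by
  have key : ∀ α ∈ T, ∀ β ∈ T, ∑ k : Fin n → Fin N, (∏ i, (ω ^ (k i : ℕ)) ^ α i) *
      (starRingEnd ℂ) (∏ i, (ω ^ (k i : ℕ)) ^ β i) = if α = β then (N : ℂ) ^ n else 0 := by
    intro α hα β hβ
    simp only [map_prod, ← Finset.prod_mul_distrib]
    rw [← Fintype.prod_sum (fun i (t : Fin N) => (ω ^ (t : ℕ)) ^ α i *
      (starRingEnd ℂ) ((ω ^ (t : ℕ)) ^ β i))]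
    rw [Finset.prod_congr rfl (fun i _ => bh_orth N (α i) (β i) (hT α hα i) (hT β hβ i) ω hω)]
    split_ifs with h
    · subst h; simp
    · obtain ⟨i, hi⟩ := Function.ne_iff.mp h
      exact Finset.prod_eq_zero (Finset.mem_univ i) (by simp [hi])
  have h2 : ((∑ k : Fin n → Fin N, ‖∑ α ∈ T, b α * ∏ i, (ω ^ (k i : ℕ)) ^ α i‖ ^ 2 : ℝ) : ℂ)
      = (((N : ℝ) ^ n * ∑ α ∈ T, ‖b α‖ ^ 2 : ℝ) : ℂ) := by
    push_cast
    simp only [← Complex.mul_conj', map_sum, map_mul, Finset.sum_mul_sum]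
    rw [Finset.sum_comm, Finset.mul_sum]
    refine Finset.sum_congr rfl fun α hα => ?_
    rw [Finset.sum_comm]
    have : ∀ β ∈ T, ∑ k : Fin n → Fin N, (b α * ∏ i, (ω ^ (k i : ℕ)) ^ α i) *
        ((starRingEnd ℂ) (b β) * (starRingEnd ℂ) (∏ i, (ω ^ (k i : ℕ)) ^ β i))
        = if α = β then (N : ℂ) ^ n * (b α * (starRingEnd ℂ) (b α)) else 0 := by
      intro β hβ
      have := key α hα β hβ
      calc _ = b α * (starRingEnd ℂ) (b β) * ∑ k : Fin n → Fin N, (∏ i, (ω ^ (k i : ℕ)) ^ α i) *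
          (starRingEnd ℂ) (∏ i, (ω ^ (k i : ℕ)) ^ β i) := by
            rw [Finset.mul_sum]; exact Finset.sum_congr rfl fun k _ => by ring
        _ = _ := by
          rw [this]; split_ifs with h
          · subst h; ring
          · simp
    rw [Finset.sum_congr rfl this]
    simp [hα]
  exact_mod_cast h2

lemma bh_count (n m : ℕ) (T : Finset (Fin n → ℕ)) (γ : Fin n → ℕ) (hγ : ∑ i, γ i = 2 * m) :
    (((T ×ˢ T).filter (fun p => p.1 + p.2 = γ)).card : ℝ) ≤ 4 ^ m := by
  have h1 : ((T ×ˢ T).filter (fun p => p.1 + p.2 = γ)).card ≤ (Finset.Iic γ).card := by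
    apply Finset.card_le_card_of_injOn (fun p => p.1)
    · intro p hp
      simp only [Finset.coe_filter, Set.mem_ofPred_eq] at hp
      simp only [Finset.coe_Iic, Set.mem_Iic]
      rw [← hp.2]
      intro i; simp
    · intro p hp q hq h
      simp only [Finset.coe_filter, Set.mem_ofPred_eq] at hp hq
      have h' : p.1 = q.1 := h
      have := hp.2.trans hq.2.symm
      rw [h'] at this
      exact Prod.ext h' (add_left_cancel this)
  have h2 : (Finset.Iic γ).card ≤ 4 ^ m := by
    have : (Finset.Iic γ).card = ∏ i, (γ i + 1) := by
      rw [Pi.card_Iic]; simp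
    rw [this]
    calc ∏ i, (γ i + 1) ≤ ∏ i, 2 ^ γ i :=
          Finset.prod_le_prod' fun i _ => Nat.lt_two_pow_self
      _ = 4 ^ m := by rw [Finset.prod_pow_eq_pow_sum, hγ, pow_mul]; norm_num
  exact_mod_cast h1.trans h2

lemma bh_L4 (n m N : ℕ) (hN : 2 * m < N) (ω : ℂ) (hω : IsPrimitiveRoot ω N)
    (b : (Fin n → ℕ) → ℂ) :
    ∑ k : Fin n → Fin N,
      ‖∑ α ∈ Finset.Nat.antidiagonalTuple n m, b α * ∏ i, (ω ^ (k i : ℕ)) ^ α i‖ ^ 4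
      ≤ (N : ℝ) ^ n * (4 ^ m * (∑ α ∈ Finset.Nat.antidiagonalTuple n m, ‖b α‖ ^ 2) ^ 2) := by
  set T := Finset.Nat.antidiagonalTuple n m with hT
  set U := Finset.Nat.antidiagonalTuple n (2 * m) with hU
  have hmaps : ∀ p ∈ T ×ˢ T, p.1 + p.2 ∈ U := by
    intro p hp
    simp only [Finset.mem_product, hT, hU, Finset.Nat.mem_antidiagonalTuple] at hp ⊢
    simp only [Pi.add_apply, Finset.sum_add_distrib]
    omega
  set d : (Fin n → ℕ) → ℂ := fun γ =>
    ∑ p ∈ (T ×ˢ T).filter (fun p => p.1 + p.2 = γ), b p.1 * b p.2 with hd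
  have hsq : ∀ k : Fin n → Fin N, (∑ α ∈ T, b α * ∏ i, (ω ^ (k i : ℕ)) ^ α i) ^ 2
      = ∑ γ ∈ U, d γ * ∏ i, (ω ^ (k i : ℕ)) ^ γ i := by
    intro k
    rw [sq, Finset.sum_mul_sum, ← Finset.sum_product', ← Finset.sum_fiberwise_of_maps_to hmaps]
    refine Finset.sum_congr rfl fun γ _ => ?_
    rw [hd, Finset.sum_mul]
    refine Finset.sum_congr rfl fun p hp => ?_
    rw [← (Finset.mem_filter.mp hp).2]
    simp only [Pi.add_apply, pow_add, Finset.prod_mul_distrib]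
    ring
  have h4 : ∀ k : Fin n → Fin N, ‖∑ α ∈ T, b α * ∏ i, (ω ^ (k i : ℕ)) ^ α i‖ ^ 4
      = ‖∑ γ ∈ U, d γ * ∏ i, (ω ^ (k i : ℕ)) ^ γ i‖ ^ 2 := by
    intro k
    rw [← hsq, norm_pow, ← pow_mul]
  simp only [h4]
  rw [bh_parseval n N ω hω U _ d]
  · refine mul_le_mul_of_nonneg_left ?_ (by positivity)
    calc ∑ γ ∈ U, ‖d γ‖ ^ 2 ≤ ∑ γ ∈ U, 4 ^ m *
          ∑ p ∈ (T ×ˢ T).filter (fun p => p.1 + p.2 = γ), ‖b p.1‖ ^ 2 * ‖b p.2‖ ^ 2 := by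
          refine Finset.sum_le_sum fun γ hγ => ?_
          have hc := bh_count n m T γ (by simpa [hU, Finset.Nat.mem_antidiagonalTuple] using hγ)
          calc ‖d γ‖ ^ 2 ≤ (∑ p ∈ (T ×ˢ T).filter (fun p => p.1 + p.2 = γ),
                ‖b p.1 * b p.2‖) ^ 2 := by
                gcongr; exact norm_sum_le _ _
            _ ≤ (((T ×ˢ T).filter (fun p => p.1 + p.2 = γ)).card : ℝ) *
                ∑ p ∈ (T ×ˢ T).filter (fun p => p.1 + p.2 = γ), ‖b p.1 * b p.2‖ ^ 2 :=
                sq_sum_le_card_mul_sum_sq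
            _ ≤ _ := by
                simp only [norm_mul, mul_pow]
                gcongr
      _ = 4 ^ m * (∑ α ∈ T, ‖b α‖ ^ 2) ^ 2 := by
          rw [← Finset.mul_sum, Finset.sum_fiberwise_of_maps_to hmaps, sq, Finset.sum_mul_sum,
            ← Finset.sum_product']
  · intro γ hγ i
    have : ∑ i, γ i = 2 * m := by simpa [hU, Finset.Nat.mem_antidiagonalTuple] using hγ
    have h3 : γ i ≤ ∑ i, γ i := Finset.single_le_sum (fun _ _ => Nat.zero_le _) (Finset.mem_univ i)
    omega

lemma bh_L1L2 (n m N : ℕ) (hN : 2 * m < N) (ω : ℂ) (hω : IsPrimitiveRoot ω N)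
    (b : (Fin n → ℕ) → ℂ) :
    (N : ℝ) ^ n * √(∑ α ∈ Finset.Nat.antidiagonalTuple n m, ‖b α‖ ^ 2) ≤ 2 ^ m *
    ∑ k : Fin n → Fin N,
      ‖∑ α ∈ Finset.Nat.antidiagonalTuple n m, b α * ∏ i, (ω ^ (k i : ℕ)) ^ α i‖ := by
  have h4 := bh_L4 n m N hN ω hω b
  have h2 := bh_parseval n N ω hω (Finset.Nat.antidiagonalTuple n m) (by
    intro γ hγ i
    have : ∑ i, γ i = m := by simpa [Finset.Nat.mem_antidiagonalTuple] using hγ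
    have h3 : γ i ≤ ∑ i, γ i := Finset.single_le_sum (fun _ _ => Nat.zero_le _) (Finset.mem_univ i)
    omega) b
  set S := ∑ α ∈ Finset.Nat.antidiagonalTuple n m, ‖b α‖ ^ 2 with hS
  set g : (Fin n → Fin N) → ℝ := fun k =>
    ‖∑ α ∈ Finset.Nat.antidiagonalTuple n m, b α * ∏ i, (ω ^ (k i : ℕ)) ^ α i‖ with hg
  change ∑ k, g k ^ 4 ≤ _ at h4
  change ∑ k, g k ^ 2 = _ at h2
  change _ ≤ 2 ^ m * ∑ k, g k
  have hg0 : ∀ k, 0 ≤ g k := fun k => norm_nonneg _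
  have hS0 : 0 ≤ S := Finset.sum_nonneg fun _ _ => by positivity
  have hV : (0 : ℝ) < (N : ℝ) ^ n := by
    have : 0 < N := by omega
    positivity
  set V := (N : ℝ) ^ n
  have hL : 0 ≤ ∑ k, g k := Finset.sum_nonneg fun k _ => hg0 k
  have c1 : (∑ k, g k ^ 2) ^ 2 ≤ (∑ k, g k) * ∑ k, g k ^ 3 :=
    Finset.sum_sq_le_sum_mul_sum_of_sq_le_mul _ (fun k _ => hg0 k)
      (fun k _ => by have := hg0 k; positivity) (fun k _ => le_of_eq (by ring))
  have c2 : (∑ k, g k ^ 3) ^ 2 ≤ (∑ k, g k ^ 2) * ∑ k, g k ^ 4 :=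
    Finset.sum_sq_le_sum_mul_sum_of_sq_le_mul _ (fun k _ => by positivity)
      (fun k _ => by positivity) (fun k _ => le_of_eq (by ring))
  rcases hS0.eq_or_lt with h0 | hpos
  · rw [← h0]; simp; positivity
  set L := ∑ k, g k
  have hV2 : 0 < V * S := by positivity
  have c3 : (V * S) ^ 4 ≤ L ^ 2 * ((V * S) * (V * (4 ^ m * S ^ 2))) := by
    calc (V * S) ^ 4 = ((V * S) ^ 2) ^ 2 := by ring
      _ ≤ (L * ∑ k, g k ^ 3) ^ 2 := by rw [h2] at c1; gcongr
      _ = L ^ 2 * (∑ k, g k ^ 3) ^ 2 := by ring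
      _ ≤ L ^ 2 * ((V * S) * (V * (4 ^ m * S ^ 2))) := by
        refine mul_le_mul_of_nonneg_left ?_ (by positivity)
        rw [h2] at c2
        exact c2.trans (by gcongr)
  have c4 : (V * √S) ^ 2 ≤ (2 ^ m * L) ^ 2 := by
    have e : (V * √S) ^ 2 = V ^ 2 * S := by rw [mul_pow, Real.sq_sqrt hS0]
    have e2 : (2 ^ m * L) ^ 2 = 4 ^ m * L ^ 2 := by
      rw [mul_pow, ← pow_mul, mul_comm m, pow_mul]; norm_num
    rw [e, e2]
    have hp : 0 < V ^ 2 * S ^ 3 := by positivity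
    refine le_of_mul_le_mul_left ?_ hp
    linarith [c3]
  exact (sq_le_sq₀ (by positivity) (by positivity)).mp c4

/-- The combinatorial (Blei type) step. -/
lemma bh_blei (m n : ℕ) (hm : 0 < m) (a : (Fin n → ℕ) → ℂ) (M : ℝ) (hM : 0 < M)
    (h : ∑ j, √(∑ α ∈ Finset.Nat.antidiagonalTuple n m, ‖(α j : ℂ) * a α‖ ^ 2) ≤ M) :
    (∑ α ∈ Finset.Nat.antidiagonalTuple n m,
          ‖a α‖ ^ ((2 * (m : ℝ)) / ((m : ℝ) + 1))) ^ (((m : ℝ) + 1) / (2 * (m : ℝ))) ≤ M := by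
  set T := Finset.Nat.antidiagonalTuple n m with hT
  have hm' : (0 : ℝ) < m := by exact_mod_cast hm
  have hm1 : (1 : ℝ) ≤ m := by exact_mod_cast hm
  set p : ℝ := (2 * (m : ℝ)) / ((m : ℝ) + 1) with hp
  have hp0 : 0 < p := by positivity
  set A : Fin n → ℝ := fun j => √(∑ α ∈ T, ‖(α j : ℂ) * a α‖ ^ 2) / M with hA
  have hA0 : ∀ j, 0 ≤ A j := fun j => by positivity
  have hA1 : ∑ j, A j ≤ 1 := by
    rw [hA, ← Finset.sum_div, div_le_one hM]; exact h
  have hAsq : ∀ j, ∑ α ∈ T, ((α j : ℝ) * (‖a α‖ / M)) ^ 2 = A j ^ 2 := by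
    intro j
    rw [hA]; simp only
    rw [div_pow, Real.sq_sqrt (Finset.sum_nonneg fun _ _ => by positivity), Finset.sum_div]
    refine Finset.sum_congr rfl fun α _ => ?_
    rw [norm_mul, Complex.norm_natCast]; ring
  have main : ∀ α ∈ T, (‖a α‖ / M) ^ p ≤
      (1 / ((m : ℝ) + 1)) * (∑ j, (α j : ℝ) * ((‖a α‖ / M) ^ 2 / A j) + ∏ j, A j ^ α j) := by
    intro α hα
    have hsum : ∑ i, α i = m := by simpa [hT, Finset.Nat.mem_antidiagonalTuple] using hα
    have hsumR : ∑ i, (α i : ℝ) = m := by exact_mod_cast hsum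
    set c := ‖a α‖ / M with hc
    have hc0 : 0 ≤ c := by positivity
    have hR : 0 ≤ ∑ j, (α j : ℝ) * (c ^ 2 / A j) + ∏ j, A j ^ α j :=
      add_nonneg (Finset.sum_nonneg fun j _ => by have := hA0 j; positivity)
        (Finset.prod_nonneg fun j _ => pow_nonneg (hA0 j) _)
    rcases hc0.eq_or_lt with h0 | hcpos
    · rw [← h0] at hR ⊢
      rw [Real.zero_rpow hp0.ne']; positivity
    have hApos : ∀ j, α j ≠ 0 → 0 < A j := by
      intro j hj
      refine lt_of_le_of_ne (hA0 j) fun h0 => ?_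
      have := hAsq j
      rw [← h0, zero_pow two_ne_zero, Finset.sum_eq_zero_iff_of_nonneg (fun _ _ => by positivity)]
        at this
      have := this α hα
      have h3 : (0 : ℝ) < α j := by exact_mod_cast Nat.pos_of_ne_zero hj
      have : 0 < ((α j : ℝ) * c) ^ 2 := by positivity
      linarith
    set Y := ∏ j, A j ^ α j with hY
    have hYpos : 0 < Y := by
      refine Finset.prod_pos fun j _ => ?_
      by_cases hj : α j = 0
      · simp [hj]
      · exact pow_pos (hApos j hj) _
    have amgm := Real.geom_mean_le_arith_mean_weighted (Finset.univ : Finset (Option (Fin n)))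
      (fun o => o.elim (1 / ((m : ℝ) + 1)) (fun j => (α j : ℝ) / ((m : ℝ) + 1)))
      (fun o => o.elim Y (fun j => c ^ 2 / A j))
      (by rintro (_ | j) _ <;> simp <;> positivity)
      (by
        rw [Fintype.sum_option]
        simp only [Option.elim]
        rw [← Finset.sum_div, hsumR]; field_simp; ring)
      (by
        rintro (_ | j) _
        · exact hYpos.le
        · have := hA0 j
          simp only [Option.elim]; positivity)
    rw [Fintype.sum_option, Fintype.prod_option] at amgm
    simp only [Option.elim] at amgm
    have e1 : Y ^ (1 / ((m : ℝ) + 1)) * ∏ j, (c ^ 2 / A j) ^ ((α j : ℝ) / ((m : ℝ) + 1))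
        = c ^ p := by
      have : ∀ j, (c ^ 2 / A j) ^ ((α j : ℝ) / ((m : ℝ) + 1))
          = (((c ^ 2 / A j) ^ α j)) ^ (1 / ((m : ℝ) + 1)) := by
        intro j
        have := hA0 j
        rw [← Real.rpow_natCast_mul (by positivity)]; congr 1; ring
      simp only [this]
      rw [Real.finsetProd_rpow _ _ (fun j _ => by have := hA0 j; positivity),
        ← Real.mul_rpow hYpos.le (Finset.prod_nonneg fun j _ => by have := hA0 j; positivity),
        hY, ← Finset.prod_mul_distrib]
      have e3 : ∏ j, (A j ^ α j * (c ^ 2 / A j) ^ α j) = c ^ (2 * m) := by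
        have : ∀ j, A j ^ α j * (c ^ 2 / A j) ^ α j = (c ^ 2) ^ α j := by
          intro j
          by_cases hj : α j = 0
          · simp [hj]
          · rw [← mul_pow, mul_div_cancel₀ _ (hApos j hj).ne']
        simp only [this]
        rw [Finset.prod_pow_eq_pow_sum, hsum, pow_mul]
      rw [e3, ← Real.rpow_natCast_mul hc0]
      congr 1
      rw [hp]; push_cast; ring
    rw [e1] at amgm
    refine amgm.trans (le_of_eq ?_)
    rw [mul_add, Finset.mul_sum, add_comm]
    congr 1
    exact Finset.sum_congr rfl fun j _ => by ring
  have tot : ∑ α ∈ T, (‖a α‖ / M) ^ p ≤ 1 := by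
    have s1 : ∑ α ∈ T, ∑ j, (α j : ℝ) * ((‖a α‖ / M) ^ 2 / A j) ≤ 1 := by
      rw [Finset.sum_comm]
      refine le_trans (Finset.sum_le_sum fun j _ => ?_) hA1
      calc ∑ α ∈ T, (α j : ℝ) * ((‖a α‖ / M) ^ 2 / A j)
          ≤ ∑ α ∈ T, ((α j : ℝ) * (‖a α‖ / M)) ^ 2 / A j := by
            refine Finset.sum_le_sum fun α _ => ?_
            have := hA0 j
            rw [mul_pow, mul_div_assoc]
            refine mul_le_mul_of_nonneg_right ?_ (by positivity)
            exact_mod_cast Nat.le_self_pow two_ne_zero (α j)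
        _ = A j ^ 2 / A j := by rw [← Finset.sum_div, hAsq]
        _ ≤ A j := by
            rcases eq_or_ne (A j) 0 with h0 | h0
            · simp [h0]
            · rw [sq, mul_div_cancel_right₀ _ h0]
    have s2 : ∑ α ∈ T, ∏ j, A j ^ α j ≤ 1 := by
      have hTe : T = Finset.piAntidiag Finset.univ m := by
        ext α; simp [hT, Finset.Nat.mem_antidiagonalTuple, Finset.mem_piAntidiag]
      calc ∑ α ∈ T, ∏ j, A j ^ α j
          ≤ ∑ α ∈ Finset.piAntidiag Finset.univ m,
              (Nat.multinomial Finset.univ α : ℝ) * ∏ j, A j ^ α j := by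
            rw [hTe]
            refine Finset.sum_le_sum fun α _ => ?_
            refine le_mul_of_one_le_left (Finset.prod_nonneg fun j _ => pow_nonneg (hA0 j) _) ?_
            exact_mod_cast Nat.multinomial_pos _ _
        _ = (∑ j, A j) ^ m := by rw [Finset.sum_pow_eq_sum_piAntidiag]
        _ ≤ 1 := pow_le_one₀ (Finset.sum_nonneg fun j _ => hA0 j) hA1
    calc ∑ α ∈ T, (‖a α‖ / M) ^ p ≤ _ := Finset.sum_le_sum main
      _ = (1 / ((m : ℝ) + 1)) * (∑ α ∈ T, ∑ j, (α j : ℝ) * ((‖a α‖ / M) ^ 2 / A j)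
            + ∑ α ∈ T, ∏ j, A j ^ α j) := by
          rw [← Finset.mul_sum, Finset.sum_add_distrib]
      _ ≤ (1 / ((m : ℝ) + 1)) * (1 + 1) := by gcongr
      _ ≤ 1 := by rw [one_div, inv_mul_le_iff₀ (by positivity)]; linarith
  have e : ((m : ℝ) + 1) / (2 * (m : ℝ)) = p⁻¹ := by rw [hp, inv_div]
  rw [e]
  have h5 : ∑ α ∈ T, ‖a α‖ ^ p ≤ M ^ p := by
    have : ∀ α ∈ T, (‖a α‖ / M) ^ p = ‖a α‖ ^ p / M ^ p := fun α _ =>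
      Real.div_rpow (norm_nonneg _) hM.le _
    rw [Finset.sum_congr rfl this, ← Finset.sum_div, div_le_one (by positivity)] at tot
    exact tot
  calc (∑ α ∈ T, ‖a α‖ ^ p) ^ p⁻¹ ≤ (M ^ p) ^ p⁻¹ :=
        Real.rpow_le_rpow (Finset.sum_nonneg fun _ _ => by positivity) h5 (by positivity)
    _ = M := Real.rpow_rpow_inv hM.le hp0.ne'

lemma bh_le_sup (n m : ℕ) (a : (Fin n → ℕ) → ℂ) (z : Fin n → ℂ) (hz : ∀ i, ‖z i‖ < 1) :
    ‖mhEval n m a z‖ ≤ polydiscSup n m a := by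
  refine le_csSup ⟨∑ α ∈ Finset.Nat.antidiagonalTuple n m, ‖a α‖, ?_⟩ ⟨z, hz, rfl⟩
  rintro x ⟨w, hw, rfl⟩
  refine (norm_sum_le _ _).trans (Finset.sum_le_sum fun α _ => ?_)
  rw [norm_mul, norm_prod]
  refine mul_le_of_le_one_right (norm_nonneg _) ?_
  refine Finset.prod_le_one (fun _ _ => norm_nonneg _) fun i _ => ?_
  rw [norm_pow]
  exact pow_le_one₀ (norm_nonneg _) (hw i).le

lemma bh_le_sup3 (n m : ℕ) (a : (Fin n → ℕ) → ℂ) (z : Fin n → ℂ) (hz : ∀ i, ‖z i‖ ≤ 2) :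
    ‖mhEval n m a z‖ ≤ 3 ^ m * polydiscSup n m a := by
  have h := bh_le_sup n m a (fun i => z i / 3) (by
    intro i
    rw [norm_div]; simp only [Complex.norm_ofNat]
    have := hz i
    linarith)
  have e : mhEval n m a z = 3 ^ m * mhEval n m a (fun i => z i / 3) := by
    unfold mhEval
    rw [Finset.mul_sum]
    refine Finset.sum_congr rfl fun α hα => ?_
    have hsum : ∑ i, α i = m := by simpa [Finset.Nat.mem_antidiagonalTuple] using hα
    simp only [div_pow, Finset.prod_div_distrib]
    rw [Finset.prod_pow_eq_pow_sum, hsum]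
    field_simp
  rw [e, norm_mul, norm_pow]
  simp only [Complex.norm_ofNat]
  gcongr

lemma bh_deriv (n m : ℕ) (a : (Fin n → ℕ) → ℂ) (z : Fin n → ℂ) (hz : ∀ i, ‖z i‖ = 1) :
    ∑ j, ‖∑ α ∈ Finset.Nat.antidiagonalTuple n m, ((α j : ℂ) * a α) * ∏ i, z i ^ α i‖
      ≤ 3 ^ m * polydiscSup n m a := by
  set D : Fin n → ℂ := fun j =>
    ∑ α ∈ Finset.Nat.antidiagonalTuple n m, ((α j : ℂ) * a α) * ∏ i, z i ^ α i with hD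
  have hw : ∀ j, ∃ w : ℂ, ‖w‖ = 1 ∧ w * D j = (‖D j‖ : ℂ) := by
    intro j
    rcases eq_or_ne (D j) 0 with h0 | h0
    · exact ⟨1, by simp, by simp [h0]⟩
    · refine ⟨(‖D j‖ : ℂ) / D j, ?_, ?_⟩
      · rw [norm_div]; simp [h0]
      · field_simp
  choose w hw1 hw2 using hw
  set f : ℂ → ℂ := fun ζ => mhEval n m a (fun i => z i * (1 + ζ * w i)) with hf
  have hder : HasDerivAt f (∑ j, w j * D j) 0 := by
    have h1 : HasDerivAt f (∑ α ∈ Finset.Nat.antidiagonalTuple n m, a α *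
        ∑ j, (∏ i ∈ Finset.univ.erase j, (z i * (1 + 0 * w i)) ^ α i) •
          ((α j : ℂ) * (z j * (1 + 0 * w j)) ^ (α j - 1) * (z j * (1 * w j)))) 0 := by
      refine HasDerivAt.fun_sum fun α _ => HasDerivAt.const_mul _ ?_
      refine HasDerivAt.fun_finsetProd fun j _ => ?_
      refine HasDerivAt.fun_pow ?_ _
      exact (((hasDerivAt_id (0 : ℂ)).mul_const (w j)).const_add 1).const_mul (z j)
    convert h1 using 1
    simp only [hD, Finset.mul_sum]
    rw [Finset.sum_comm]
    refine Finset.sum_congr rfl fun α _ => Finset.sum_congr rfl fun j _ => ?_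
    rw [← Finset.mul_prod_erase _ _ (Finset.mem_univ j)]
    simp only [zero_mul, add_zero, mul_one, one_mul, smul_eq_mul]
    rcases Nat.eq_zero_or_pos (α j) with h0 | h0
    · simp [h0]
    · obtain ⟨k, hk⟩ := Nat.exists_eq_succ_of_ne_zero h0.ne'
      rw [hk]; simp only [Nat.succ_eq_add_one, Nat.add_sub_cancel, pow_succ]; ring
  have hdiff : Differentiable ℂ f := by
    simp only [hf, mhEval]
    fun_prop
  have hb := Complex.norm_deriv_le_of_forall_mem_sphere_norm_le (f := f) (c := 0) (R := 1)
    (C := 3 ^ m * polydiscSup n m a) one_pos hdiff.diffContOnCl (by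
      intro ζ hζ
      refine bh_le_sup3 n m a _ fun i => ?_
      rw [norm_mul, hz i, one_mul]
      have : ‖ζ‖ = 1 := by simpa using hζ
      calc ‖1 + ζ * w i‖ ≤ ‖(1 : ℂ)‖ + ‖ζ * w i‖ := norm_add_le _ _
        _ = 2 := by rw [norm_mul, this, hw1]; norm_num)
  rw [hder.deriv, div_one] at hb
  have e : ∑ j, w j * D j = ((∑ j, ‖D j‖ : ℝ) : ℂ) := by
    push_cast; exact Finset.sum_congr rfl fun j _ => hw2 j
  rw [e, Complex.norm_real] at hb
  exact (le_abs_self _).trans hb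

/-- Hypercontractive Bohnenblust–Hille inequality for `m`-homogeneous polynomials. -/
theorem bohnenblust_hille_hypercontractive :
    ∃ C : ℝ, 1 ≤ C ∧ ∀ (m n : ℕ), 0 < m → 0 < n → ∀ a : (Fin n → ℕ) → ℂ,
      (∑ α ∈ Finset.Nat.antidiagonalTuple n m,
          ‖a α‖ ^ ((2 * (m : ℝ)) / ((m : ℝ) + 1))) ^ (((m : ℝ) + 1) / (2 * (m : ℝ)))
        ≤ C ^ m * polydiscSup n m a := by
  refine ⟨6, by norm_num, fun m n hm hn a => ?_⟩
  have hN : 2 * m + 1 ≠ 0 := by omega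
  have hω := Complex.isPrimitiveRoot_exp (2 * m + 1) hN
  set N := 2 * m + 1 with hNdef
  set ω := Complex.exp (2 * Real.pi * Complex.I / (N : ℕ)) with hωdef
  have hn1 : ‖ω‖ = 1 := hω.norm'_eq_one hN
  have hsup : 0 ≤ polydiscSup n m a :=
    (norm_nonneg _).trans (bh_le_sup n m a (fun _ => 0) (by simp))
  have hV : (0 : ℝ) < (N : ℝ) ^ n := by positivity
  have key : ∑ j, √(∑ α ∈ Finset.Nat.antidiagonalTuple n m, ‖(α j : ℂ) * a α‖ ^ 2)
      ≤ 6 ^ m * polydiscSup n m a := by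
    refine le_of_mul_le_mul_left ?_ hV
    rw [Finset.mul_sum]
    calc _ ≤ ∑ j : Fin n, 2 ^ m * ∑ k : Fin n → Fin N,
          ‖∑ α ∈ Finset.Nat.antidiagonalTuple n m,
            ((α j : ℂ) * a α) * ∏ i, (ω ^ (k i : ℕ)) ^ α i‖ :=
          Finset.sum_le_sum fun j _ =>
            bh_L1L2 n m N (by omega) ω hω (fun α => (α j : ℂ) * a α)
      _ = 2 ^ m * ∑ k : Fin n → Fin N, ∑ j : Fin n,
          ‖∑ α ∈ Finset.Nat.antidiagonalTuple n m,
            ((α j : ℂ) * a α) * ∏ i, (ω ^ (k i : ℕ)) ^ α i‖ := by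
          rw [← Finset.mul_sum, Finset.sum_comm]
      _ ≤ 2 ^ m * ∑ k : Fin n → Fin N, 3 ^ m * polydiscSup n m a := by
          gcongr with k
          exact bh_deriv n m a (fun i => ω ^ (k i : ℕ)) (fun i => by simp [hn1])
      _ = (N : ℝ) ^ n * (6 ^ m * polydiscSup n m a) := by
          rw [Finset.sum_const, Finset.card_univ, Fintype.card_fun, Fintype.card_fin,
            Fintype.card_fin, nsmul_eq_mul]
          rw [show (6 : ℝ) = 2 * 3 by norm_num, mul_pow]
          push_cast; ring
  refine le_of_forall_pos_le_add fun ε hε => ?_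
  exact bh_blei m n hm a _ (by positivity) (by linarith)
end

section
/- There is an absolute constant C ≥ 1 such that for every 1 ≤ p ≤ ∞ and all positive integers m, n, the unconditional basis constant of the monomials in 𝒫(^m ℓ_p^n) satisfies χ_mon(𝒫(^m ℓ_p^n)) ≤ C^m · (1 + n/m)^{(m-1)(1 - 1/min(p,2))}. -/
open Finset
open scoped ENNReal

/-- The `ℓ_p`-norm of a vector in `ℂ^n`, for `1 ≤ p ≤ ∞`. -/
noncomputable def pNorm (p : ℝ≥0∞) {n : ℕ} (z : Fin n → ℂ) : ℝ :=
  if p = ∞ then ⨆ i, ‖z i‖ else (∑ i, ‖z i‖ ^ p.toReal) ^ (1 / p.toReal)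

open ComplexConjugate in
theorem ubc_orth1 (N : ℕ) (hN : 0 < N) (ζ : ℂ) (hζ : IsPrimitiveRoot ζ N) (a b : ℕ)
    (ha : a < N) (hb : b < N) :
    ∑ j : Fin N, (ζ ^ (j : ℕ)) ^ a * conj ((ζ ^ (j : ℕ)) ^ b) = if a = b then (N : ℂ) else 0 := by
  have hz1 : ‖ζ‖ = 1 := hζ.norm'_eq_one hN.ne'
  have hz0 : ζ ≠ 0 := by rintro rfl; simp at hz1
  have hc : conj ζ = ζ⁻¹ := (Complex.inv_eq_conj hz1).symm
  have key : ∀ j : ℕ, (ζ ^ j) ^ a * conj ((ζ ^ j) ^ b) = (ζ ^ a * (ζ ^ b)⁻¹) ^ j := by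
    intro j
    simp only [map_pow, hc, mul_pow, inv_pow, ← pow_mul, mul_comm]
  simp only [key]
  rw [Fin.sum_univ_eq_sum_range (fun j => (ζ ^ a * (ζ ^ b)⁻¹) ^ j) N]
  split_ifs with h
  · subst h
    simp [hz0]
  · have hx : ζ ^ a * (ζ ^ b)⁻¹ ≠ 1 := by
      intro h1
      apply h
      have : ζ ^ a = ζ ^ b := by
        field_simp at h1; exact h1
      exact hζ.pow_inj ha hb this
    rw [geom_sum_eq hx]
    have : (ζ ^ a * (ζ ^ b)⁻¹) ^ N = 1 := by
      rw [mul_pow, inv_pow, ← pow_mul, ← pow_mul, mul_comm a, mul_comm b, pow_mul, pow_mul,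
        hζ.pow_eq_one]
      simp
    simp [this]

open ComplexConjugate in
/-- A finite set of points on the torus on which the characters are orthogonal. -/
theorem ubc_torus (n N : ℕ) (hN : 0 < N) :
    ∃ pt : (Fin n → Fin N) → Fin n → ℂ, (∀ t i, ‖pt t i‖ = 1) ∧
      ∀ α β : Fin n → ℕ, (∀ i, α i < N) → (∀ i, β i < N) →
        ∑ t, (∏ i, pt t i ^ α i) * conj (∏ i, pt t i ^ β i)
          = if α = β then ((N ^ n : ℕ) : ℂ) else 0 := by
  have hζ := Complex.isPrimitiveRoot_exp N hN.ne'
  set ζ := Complex.exp (2 * Real.pi * Complex.I / N) with hdef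
  have hz1 : ‖ζ‖ = 1 := hζ.norm'_eq_one hN.ne'
  refine ⟨fun t i => ζ ^ (t i : ℕ), fun t i => by simp [hz1], fun α β hα hβ => ?_⟩
  have h1 : ∀ t : Fin n → Fin N, (∏ i, (ζ ^ (t i : ℕ)) ^ α i) * conj (∏ i, (ζ ^ (t i : ℕ)) ^ β i)
      = ∏ i, ((ζ ^ (t i : ℕ)) ^ α i * conj ((ζ ^ (t i : ℕ)) ^ β i)) := by
    intro t
    rw [map_prod, Finset.prod_mul_distrib]
  simp only [h1]
  have h2 := Finset.prod_univ_sum (fun _ : Fin n => (Finset.univ : Finset (Fin N)))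
    (fun i j => (ζ ^ (j : ℕ)) ^ α i * conj ((ζ ^ (j : ℕ)) ^ β i))
  rw [Fintype.piFinset_univ] at h2
  rw [← h2]
  rw [Finset.prod_congr rfl (fun i _ => ubc_orth1 N hN ζ hζ (α i) (β i) (hα i) (hβ i))]
  split_ifs with h
  · subst h; simp
  · obtain ⟨i, hi⟩ := Function.ne_iff.mp h
    exact Finset.prod_eq_zero (Finset.mem_univ i) (by simp [hi])

open ComplexConjugate in
theorem ubc_coeff (n N : ℕ) (hN : 0 < N) (pt : (Fin n → Fin N) → Fin n → ℂ)
    (ho : ∀ α β : Fin n → ℕ, (∀ i, α i < N) → (∀ i, β i < N) →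
        ∑ t, (∏ i, pt t i ^ α i) * conj (∏ i, pt t i ^ β i)
          = if α = β then ((N ^ n : ℕ) : ℂ) else 0)
    (hp : ∀ t i, ‖pt t i‖ = 1)
    (S : Finset (Fin n → ℕ)) (hS : ∀ α ∈ S, ∀ i, α i < N) (c : (Fin n → ℕ) → ℂ)
    (β : Fin n → ℕ) (hβ : β ∈ S) (K : ℝ)
    (hK : ∀ t, ‖∑ α ∈ S, c α * ∏ i, pt t i ^ α i‖ ≤ K) : ‖c β‖ ≤ K := by
  have h1 : ∑ t, (∑ α ∈ S, c α * ∏ i, pt t i ^ α i) * conj (∏ i, pt t i ^ β i)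
      = c β * ((N ^ n : ℕ) : ℂ) := by
    simp only [Finset.sum_mul]
    rw [Finset.sum_comm]
    simp only [mul_assoc]
    simp only [← Finset.mul_sum]
    rw [Finset.sum_congr rfl (fun α hα => by rw [ho α β (hS α hα) (hS β hβ)])]
    simp [hβ]
  have h2 : ‖c β * ((N ^ n : ℕ) : ℂ)‖ ≤ (N ^ n : ℕ) * K := by
    rw [← h1]
    refine (norm_sum_le _ _).trans ?_
    refine (Finset.sum_le_card_nsmul _ _ K ?_).trans ?_
    · intro t _
      rw [norm_mul, RCLike.norm_conj, norm_prod]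
      simp [hp]
      exact hK t
    · simp
  rw [norm_mul, Complex.norm_natCast, mul_comm] at h2
  have : (0 : ℝ) < (N ^ n : ℕ) := by positivity
  exact le_of_mul_le_mul_left h2 this

open ComplexConjugate in
theorem ubc_parseval (n N : ℕ) (pt : (Fin n → Fin N) → Fin n → ℂ)
    (ho : ∀ α β : Fin n → ℕ, (∀ i, α i < N) → (∀ i, β i < N) →
        ∑ t, (∏ i, pt t i ^ α i) * conj (∏ i, pt t i ^ β i)
          = if α = β then ((N ^ n : ℕ) : ℂ) else 0)
    (S : Finset (Fin n → ℕ)) (hS : ∀ α ∈ S, ∀ i, α i < N) (c : (Fin n → ℕ) → ℂ) :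
    ∑ t, ‖∑ α ∈ S, c α * ∏ i, pt t i ^ α i‖ ^ 2 = (N ^ n : ℕ) * ∑ α ∈ S, ‖c α‖ ^ 2 := by
  have : ((∑ t, ‖∑ α ∈ S, c α * ∏ i, pt t i ^ α i‖ ^ 2 : ℝ) : ℂ)
      = (((N ^ n : ℕ) * ∑ α ∈ S, ‖c α‖ ^ 2 : ℝ) : ℂ) := by
    push_cast
    simp only [← Complex.mul_conj']
    have : ∀ t, (∑ α ∈ S, c α * ∏ i, pt t i ^ α i) * conj (∑ α ∈ S, c α * ∏ i, pt t i ^ α i)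
        = ∑ α ∈ S, ∑ β ∈ S, (c α * conj (c β)) *
          ((∏ i, pt t i ^ α i) * conj (∏ i, pt t i ^ β i)) := by
      intro t
      rw [map_sum, Finset.sum_mul_sum]
      refine Finset.sum_congr rfl fun α _ => Finset.sum_congr rfl fun β _ => ?_
      rw [map_mul]; ring
    simp only [this]
    rw [Finset.sum_comm, Finset.mul_sum]
    refine Finset.sum_congr rfl fun α hα => ?_
    rw [Finset.sum_comm]
    simp only [← Finset.mul_sum]
    rw [Finset.sum_congr rfl (fun β hβ => by rw [ho α β (hS α hα) (hS β hβ)])]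
    simp [hα]
    ring
  exact_mod_cast this

theorem ubc_card_pairs (n d : ℕ) (γ : Fin n → ℕ) (hγ : ∑ i, γ i = 2 * d)
    (S : Finset (Fin n → ℕ)) :
    (((S ×ˢ S).filter (fun x => x.1 + x.2 = γ)).card : ℝ) ≤ 4 ^ d := by
  have h1 : ((S ×ˢ S).filter (fun x => x.1 + x.2 = γ)).card
      ≤ (Fintype.piFinset (fun i => Finset.range (γ i + 1))).card := by
    refine Finset.card_le_card_of_injOn (fun x => x.1) ?_ ?_
    · intro x hx
      simp only [Finset.coe_filter, Set.mem_ofPred_eq] at hx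
      simp only [Finset.mem_coe, Fintype.mem_piFinset, Finset.mem_range]
      intro i
      have := congrFun hx.2 i
      simp at this
      omega
    · intro x hx y hy hxy
      simp only [Finset.coe_filter, Set.mem_ofPred_eq] at hx hy
      refine Prod.ext hxy ?_
      funext i
      have h1 := congrFun hx.2 i
      have h2 := congrFun hy.2 i
      have h3 := congrFun hxy i
      simp at h1 h2 h3
      omega
  have h2 : (Fintype.piFinset (fun i => Finset.range (γ i + 1))).card ≤ 4 ^ d := by
    rw [Fintype.card_piFinset]
    simp only [Finset.card_range]
    calc ∏ i, (γ i + 1) ≤ ∏ i, 2 ^ γ i :=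
          Finset.prod_le_prod' fun i _ => Nat.lt_two_pow_self
      _ = 4 ^ d := by rw [Finset.prod_pow_eq_pow_sum, hγ, pow_mul]; norm_num
  exact_mod_cast h1.trans h2

open ComplexConjugate in
theorem ubc_four (n d N : ℕ) (hN : 2 * d < N) (pt : (Fin n → Fin N) → Fin n → ℂ)
    (ho : ∀ α β : Fin n → ℕ, (∀ i, α i < N) → (∀ i, β i < N) →
        ∑ t, (∏ i, pt t i ^ α i) * conj (∏ i, pt t i ^ β i)
          = if α = β then ((N ^ n : ℕ) : ℂ) else 0)
    (c : (Fin n → ℕ) → ℂ) :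
    ∑ t, ‖∑ α ∈ Finset.Nat.antidiagonalTuple n d, c α * ∏ i, pt t i ^ α i‖ ^ 4
      ≤ (N ^ n : ℕ) * (4 ^ d * (∑ α ∈ Finset.Nat.antidiagonalTuple n d, ‖c α‖ ^ 2) ^ 2) := by
  set S := Finset.Nat.antidiagonalTuple n d with hS
  set S2 := Finset.Nat.antidiagonalTuple n (2 * d) with hS2
  have hmaps : ∀ x ∈ S ×ˢ S, x.1 + x.2 ∈ S2 := by
    intro x hx
    simp only [hS, hS2, Finset.mem_product, Finset.Nat.mem_antidiagonalTuple] at hx ⊢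
    simp only [Pi.add_apply, Finset.sum_add_distrib]
    omega
  let c2 : (Fin n → ℕ) → ℂ := fun γ =>
    ∑ x ∈ (S ×ˢ S).filter (fun x => x.1 + x.2 = γ), c x.1 * c x.2
  have hsq : ∀ t, (∑ α ∈ S, c α * ∏ i, pt t i ^ α i) ^ 2
      = ∑ γ ∈ S2, c2 γ * ∏ i, pt t i ^ γ i := by
    intro t
    rw [pow_two, Finset.sum_mul_sum, ← Finset.sum_product', ← Finset.sum_fiberwise_of_maps_to hmaps]
    refine Finset.sum_congr rfl fun γ _ => ?_
    rw [Finset.sum_mul]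
    refine Finset.sum_congr rfl fun x hx => ?_
    rw [← (Finset.mem_filter.mp hx).2]
    simp only [Pi.add_apply, pow_add, Finset.prod_mul_distrib]
    ring
  have h4 : ∀ t, ‖∑ α ∈ S, c α * ∏ i, pt t i ^ α i‖ ^ 4
      = ‖∑ γ ∈ S2, c2 γ * ∏ i, pt t i ^ γ i‖ ^ 2 := by
    intro t
    rw [← hsq, norm_pow]; ring
  simp only [h4]
  rw [ubc_parseval n N pt ho S2 _ c2]
  · refine mul_le_mul_of_nonneg_left ?_ (by positivity)
    have h5 : ∀ γ ∈ S2, ‖c2 γ‖ ^ 2 ≤ 4 ^ d *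
        ∑ x ∈ (S ×ˢ S).filter (fun x => x.1 + x.2 = γ), ‖c x.1‖ ^ 2 * ‖c x.2‖ ^ 2 := by
      intro γ hγ
      have hg : ∑ i, γ i = 2 * d := Finset.Nat.mem_antidiagonalTuple.mp hγ
      calc ‖c2 γ‖ ^ 2
          ≤ (∑ x ∈ (S ×ˢ S).filter (fun x => x.1 + x.2 = γ), ‖c x.1 * c x.2‖) ^ 2 := by
            gcongr; exact norm_sum_le _ _
        _ ≤ (((S ×ˢ S).filter (fun x => x.1 + x.2 = γ)).card : ℝ) *
            ∑ x ∈ (S ×ˢ S).filter (fun x => x.1 + x.2 = γ), ‖c x.1 * c x.2‖ ^ 2 :=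
            sq_sum_le_card_mul_sum_sq
        _ ≤ 4 ^ d * ∑ x ∈ (S ×ˢ S).filter (fun x => x.1 + x.2 = γ), ‖c x.1 * c x.2‖ ^ 2 := by
            gcongr
            exact ubc_card_pairs n d γ hg S
        _ = _ := by simp only [norm_mul, mul_pow]
    refine (Finset.sum_le_sum h5).trans ?_
    rw [← Finset.mul_sum, Finset.sum_fiberwise_of_maps_to hmaps, pow_two, Finset.sum_mul_sum,
      Finset.sum_product]
  · intro γ hγ i
    have hg : ∑ i, γ i = 2 * d := Finset.Nat.mem_antidiagonalTuple.mp hγ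
    have : γ i ≤ ∑ i, γ i := Finset.single_le_sum (fun _ _ => Nat.zero_le _) (Finset.mem_univ i)
    omega

open ComplexConjugate in
/-- The `L¹`-`L²` inequality for homogeneous polynomials on the (discretised) torus. -/
theorem ubc_khinchine (n d N : ℕ) (hN : 2 * d < N) (pt : (Fin n → Fin N) → Fin n → ℂ)
    (ho : ∀ α β : Fin n → ℕ, (∀ i, α i < N) → (∀ i, β i < N) →
        ∑ t, (∏ i, pt t i ^ α i) * conj (∏ i, pt t i ^ β i)
          = if α = β then ((N ^ n : ℕ) : ℂ) else 0)
    (c : (Fin n → ℕ) → ℂ) :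
    (N ^ n : ℕ) * √(∑ α ∈ Finset.Nat.antidiagonalTuple n d, ‖c α‖ ^ 2)
      ≤ 4 * 2 ^ d * ∑ t, ‖∑ α ∈ Finset.Nat.antidiagonalTuple n d, c α * ∏ i, pt t i ^ α i‖ := by
  have h4 := ubc_four n d N hN pt ho c
  have h2 := ubc_parseval n N pt ho (Finset.Nat.antidiagonalTuple n d) (by
    intro γ hγ i
    have hg : ∑ i, γ i = d := Finset.Nat.mem_antidiagonalTuple.mp hγ
    have : γ i ≤ ∑ i, γ i := Finset.single_le_sum (fun _ _ => Nat.zero_le _) (Finset.mem_univ i)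
    omega) c
  set A := ∑ α ∈ Finset.Nat.antidiagonalTuple n d, ‖c α‖ ^ 2 with hA
  set Q : (Fin n → Fin N) → ℝ :=
    fun t => ‖∑ α ∈ Finset.Nat.antidiagonalTuple n d, c α * ∏ i, pt t i ^ α i‖ with hQ
  have hA0 : 0 ≤ A := Finset.sum_nonneg fun _ _ => by positivity
  have hQ0 : ∀ t, 0 ≤ Q t := fun t => norm_nonneg _
  change ∑ t, Q t ^ 4 ≤ _ at h4
  change ∑ t, Q t ^ 2 = _ at h2
  change _ ≤ 4 * 2 ^ d * ∑ t, Q t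
  set M : ℝ := ((N ^ n : ℕ) : ℝ) with hM
  have hM0 : 0 < M := by rw [hM]; have : 0 < N := by omega
                         positivity
  have hB0 : 0 ≤ ∑ t, Q t := Finset.sum_nonneg fun t _ => hQ0 t
  set s := √A with hs
  have hss : s ^ 2 = A := Real.sq_sqrt hA0
  rcases (Real.sqrt_nonneg A).eq_or_lt with h0 | hpos
  · rw [hs, ← h0]; simp; positivity
  rw [← hs] at hpos
  -- choose `l = 2 * 2 ^ d * s`
  set l : ℝ := 2 * 2 ^ d * s with hl
  have hl0 : 0 < l := by positivity
  have hpt : ∀ t, l ^ 2 * Q t ^ 2 ≤ l ^ 3 * Q t + Q t ^ 4 := by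
    intro t
    have hq := hQ0 t
    rcases le_total (Q t) l with h | h
    · have : l ^ 2 * Q t * (Q t) ≤ l ^ 2 * Q t * l := by gcongr
      nlinarith [pow_nonneg hq 4]
    · have : Q t ^ 2 * l ^ 2 ≤ Q t ^ 2 * Q t ^ 2 := by gcongr
      nlinarith [mul_nonneg (pow_nonneg hl0.le 3) hq]
  have hsum : l ^ 2 * ∑ t, Q t ^ 2 ≤ l ^ 3 * ∑ t, Q t + ∑ t, Q t ^ 4 := by
    rw [Finset.mul_sum, Finset.mul_sum, ← Finset.sum_add_distrib]
    exact Finset.sum_le_sum fun t _ => hpt t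
  rw [h2, ← hss] at hsum
  rw [← hss] at h4
  have h44 : (4 : ℝ) ^ d = (2 ^ d) ^ 2 := by rw [← pow_mul, mul_comm, pow_mul]; norm_num
  rw [h44] at h4
  have hk : (0:ℝ) < 2 ^ d := by positivity
  generalize (2:ℝ) ^ d = k at *
  generalize ∑ t, Q t = B at *
  generalize ∑ t, Q t ^ 4 = F at *
  -- `l^2 M s^2 ≤ l^3 B + M k^2 s^4`
  have e1 : M * (k ^ 2 * (s ^ 2) ^ 2) = M * s ^ 2 * l ^ 2 / 4 := by rw [hl]; ring
  have e2 : l ^ 2 * (3 / 4 * (M * s ^ 2)) ≤ l ^ 2 * (l * B) := by nlinarith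
  have e3 := le_of_mul_le_mul_left e2 (by positivity)
  have e4 : s * (3 / 4 * (M * s)) ≤ s * (2 * k * B) := by rw [hl] at e3; nlinarith
  have e5 := le_of_mul_le_mul_left e4 hpos
  nlinarith [mul_nonneg hk.le hB0]

theorem ubc_pNorm_eq (p : ℝ≥0∞) (hp : 1 ≤ p) {n : ℕ} (z : Fin n → ℂ) :
    pNorm p z = ‖WithLp.toLp p z‖ := by
  unfold pNorm
  split_ifs with h
  · subst h
    rw [PiLp.norm_eq_ciSup]
  · rw [PiLp.norm_eq_sum (ENNReal.toReal_pos (by positivity) h)]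

theorem ubc_pNorm_congr (p : ℝ≥0∞) {n : ℕ} (z w : Fin n → ℂ) (h : ∀ i, ‖z i‖ = ‖w i‖) :
    pNorm p z = pNorm p w := by
  unfold pNorm
  simp only [h]

theorem ubc_pNorm_half (p : ℝ≥0∞) (hp : 1 ≤ p) {n : ℕ} (w u : Fin n → ℂ) (t : ℂ)
    (hw : pNorm p w ≤ 1) (hu : pNorm p u < 1) (ht : ‖t‖ = 1) :
    pNorm p (fun i => (w i + t * u i) / 2) < 1 := by
  have : Fact (1 ≤ p) := ⟨hp⟩
  rw [ubc_pNorm_eq p hp] at *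
  have : WithLp.toLp p (fun i => (w i + t * u i) / 2)
      = (1 / 2 : ℂ) • (WithLp.toLp p w + t • WithLp.toLp p u) := by
    ext i
    simp
    ring
  rw [this, norm_smul]
  have h1 := norm_add_le (WithLp.toLp p w) (t • WithLp.toLp p u)
  rw [norm_smul, ht] at h1
  have h2 : ‖(1 / 2 : ℂ)‖ = 1 / 2 := by norm_num
  rw [h2]
  linarith

theorem ubc_coord_le (p : ℝ≥0∞) (hp : 1 ≤ p) {n : ℕ} (w : Fin n → ℂ) (i : Fin n) :
    ‖w i‖ ≤ pNorm p w := by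
  have : Fact (1 ≤ p) := ⟨hp⟩
  rw [ubc_pNorm_eq p hp]
  exact PiLp.norm_apply_le (WithLp.toLp p w) i

theorem ubc_bdd (p : ℝ≥0∞) (hp : 1 ≤ p) (n m : ℕ) (a : (Fin n → ℕ) → ℂ) :
    BddAbove {x : ℝ | ∃ w : Fin n → ℂ, pNorm p w < 1 ∧ x = ‖mhEval n m a w‖} := by
  refine ⟨∑ α ∈ Finset.Nat.antidiagonalTuple n m, ‖a α‖, ?_⟩
  rintro x ⟨w, hw, rfl⟩
  unfold mhEval
  refine (norm_sum_le _ _).trans (Finset.sum_le_sum fun α _ => ?_)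
  rw [norm_mul, norm_prod]
  refine mul_le_of_le_one_right (norm_nonneg _) (Finset.prod_le_one (fun _ _ => norm_nonneg _) ?_)
  intro i _
  rw [norm_pow]
  exact pow_le_one₀ (norm_nonneg _) ((ubc_coord_le p hp w i).trans hw.le)

theorem ubc_reindex {M : Type*} [AddCommMonoid M] (n d : ℕ) (f : (Fin n → ℕ) → Fin n → M) :
    ∑ α ∈ Finset.Nat.antidiagonalTuple n (d + 1), ∑ k, α k • f α k
      = ∑ β ∈ Finset.Nat.antidiagonalTuple n d, ∑ k, (β k + 1) • f (β + Pi.single k 1) k := by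
  rw [Finset.sum_comm]
  conv_rhs => rw [Finset.sum_comm]
  refine Finset.sum_congr rfl fun k _ => ?_
  symm
  refine Finset.sum_of_injOn (fun β => β + Pi.single k 1) ?_ ?_ ?_ ?_
  · intro x _ y _ h
    exact add_right_cancel h
  · intro x hx
    simp only [Finset.mem_coe, Finset.Nat.mem_antidiagonalTuple] at hx ⊢
    simp [Finset.sum_add_distrib, hx]
  · intro α hα h
    simp only [Finset.Nat.mem_antidiagonalTuple] at hα
    by_cases h0 : α k = 0
    · simp [h0]
    · exfalso
      apply h
      refine ⟨α - Pi.single k 1, ?_, ?_⟩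
      · simp only [Finset.mem_coe, Finset.Nat.mem_antidiagonalTuple]
        have : α - Pi.single k 1 + Pi.single k 1 = α := by
          funext i
          by_cases hi : i = k
          · subst hi; simp; omega
          · simp [hi]
        have h2 : ∑ i, (α - Pi.single k 1 + Pi.single k 1 : Fin n → ℕ) i = d + 1 := by rw [this]; exact hα
        simp only [Pi.add_apply, Finset.sum_add_distrib] at h2
        simp at h2
        simpa using h2
      · funext i
        by_cases hi : i = k
        · subst hi; simp; omega
        · simp [hi]
  · intro β _
    simp

theorem ubc_prod_single {K : Type*} [CommMonoid K] (n : ℕ) (β : Fin n → ℕ) (k : Fin n)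
    (w : Fin n → K) :
    ∏ i, w i ^ (β + Pi.single k 1 : Fin n → ℕ) i = w k * ∏ i, w i ^ β i := by
  simp only [Pi.add_apply, pow_add, Finset.prod_mul_distrib]
  rw [mul_comm]
  congr 1
  rw [Finset.prod_eq_single k]
  · simp
  · intro b _ hb; simp [hb]
  · simp

theorem ubc_prod_erase {K : Type*} [CommMonoid K] (n : ℕ) (β : Fin n → ℕ) (k : Fin n)
    (w : Fin n → K) :
    (∏ i ∈ Finset.univ.erase k, w i ^ (β + Pi.single k 1 : Fin n → ℕ) i) * w k ^ β k = ∏ i, w i ^ β i := by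
  rw [← Finset.prod_erase_mul Finset.univ (fun i => w i ^ β i) (Finset.mem_univ k)]
  congr 1
  refine Finset.prod_congr rfl fun i hi => ?_
  simp [Finset.ne_of_mem_erase hi]

theorem ubc_sum_identity (n d : ℕ) (a : (Fin n → ℕ) → ℂ) (z : Fin n → ℂ) :
    ((d : ℝ) + 1) * ∑ α ∈ Finset.Nat.antidiagonalTuple n (d + 1), ‖a α‖ * ∏ i, ‖z i‖ ^ α i
      = ∑ β ∈ Finset.Nat.antidiagonalTuple n d,
        (∑ k, ‖((β k : ℂ) + 1) * a (β + Pi.single k 1)‖ * ‖z k‖) * ∏ i, ‖z i‖ ^ β i := by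
  have h := ubc_reindex n d (fun α (_ : Fin n) => ‖a α‖ * ∏ i, ‖z i‖ ^ α i)
  have h1 : ∑ α ∈ Finset.Nat.antidiagonalTuple n (d + 1), ∑ k, α k • (‖a α‖ * ∏ i, ‖z i‖ ^ α i)
      = ((d : ℝ) + 1) *
        ∑ α ∈ Finset.Nat.antidiagonalTuple n (d + 1), ‖a α‖ * ∏ i, ‖z i‖ ^ α i := by
    rw [Finset.mul_sum]
    refine Finset.sum_congr rfl fun α hα => ?_
    rw [← Finset.sum_smul, Finset.Nat.mem_antidiagonalTuple.mp hα, nsmul_eq_mul]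
    push_cast; ring
  rw [← h1, h]
  refine Finset.sum_congr rfl fun β _ => ?_
  rw [Finset.sum_mul]
  refine Finset.sum_congr rfl fun k _ => ?_
  rw [ubc_prod_single, nsmul_eq_mul, norm_mul]
  have : ‖(β k : ℂ) + 1‖ = ((β k + 1 : ℕ) : ℝ) := by
    rw [← Complex.norm_natCast]; push_cast; rfl
  rw [this]
  ring

theorem ubc_deriv (p : ℝ≥0∞) (hp : 1 ≤ p) (n d : ℕ) (a : (Fin n → ℕ) → ℂ) (S : ℝ)
    (hS : ∀ w : Fin n → ℂ, pNorm p w < 1 → ‖mhEval n (d + 1) a w‖ ≤ S)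
    (w u : Fin n → ℂ) (hw : pNorm p w ≤ 1) (hu : pNorm p u < 1) :
    ‖∑ β ∈ Finset.Nat.antidiagonalTuple n d,
      (∑ k, ((β k : ℂ) + 1) * a (β + Pi.single k 1) * u k) * ∏ i, w i ^ β i‖
      ≤ 2 ^ (d + 1) * S := by
  let f : ℂ → ℂ := fun t => mhEval n (d + 1) a (fun i => w i + t * u i)
  have hder : HasDerivAt f (∑ α ∈ Finset.Nat.antidiagonalTuple n (d + 1),
      a α * ∑ k, (∏ j ∈ Finset.univ.erase k, (w j + 0 * u j) ^ α j) •
        ((α k : ℂ) * (w k + 0 * u k) ^ (α k - 1) * u k)) 0 := by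
    refine HasDerivAt.fun_sum fun α _ => HasDerivAt.const_mul (a α) ?_
    refine HasDerivAt.fun_finsetProd fun k _ => ?_
    have : HasDerivAt (fun t : ℂ => w k + t * u k) (u k) 0 := by
      simpa using ((hasDerivAt_id (0 : ℂ)).mul_const (u k)).const_add (w k)
    exact this.pow (α k)
  have hdiff : Differentiable ℂ f := by
    unfold f mhEval
    fun_prop
  have hbound : ∀ t ∈ Metric.sphere (0 : ℂ) 1, ‖f t‖ ≤ 2 ^ (d + 1) * S := by
    intro t ht
    have ht1 : ‖t‖ = 1 := by simpa using ht
    have h1 := hS _ (ubc_pNorm_half p hp w u t hw hu ht1)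
    have h2 : f t = 2 ^ (d + 1) * mhEval n (d + 1) a (fun i => (w i + t * u i) / 2) := by
      unfold f mhEval
      rw [Finset.mul_sum]
      refine Finset.sum_congr rfl fun α hα => ?_
      simp only [div_pow, Finset.prod_div_distrib]
      rw [Finset.prod_pow_eq_pow_sum, Finset.Nat.mem_antidiagonalTuple.mp hα]
      field_simp
    rw [h2, norm_mul, norm_pow]
    have : ‖(2 : ℂ)‖ = 2 := by norm_num
    rw [this]
    gcongr
  have hC := Complex.norm_deriv_le_of_forall_mem_sphere_norm_le one_pos hdiff.diffContOnCl hbound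
  rw [hder.deriv, div_one] at hC
  refine le_of_eq_of_le (congrArg (fun x : ℂ => ‖x‖) ?_) hC
  have h := ubc_reindex n d (fun α k => a α * ((∏ j ∈ Finset.univ.erase k, w j ^ α j) *
        (w k ^ (α k - 1) * u k)))
  have h1 : ∑ α ∈ Finset.Nat.antidiagonalTuple n (d + 1),
      a α * ∑ k, (∏ j ∈ Finset.univ.erase k, (w j + 0 * u j) ^ α j) •
        ((α k : ℂ) * (w k + 0 * u k) ^ (α k - 1) * u k) =
      ∑ α ∈ Finset.Nat.antidiagonalTuple n (d + 1), ∑ k, α k •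
        (a α * ((∏ j ∈ Finset.univ.erase k, w j ^ α j) * (w k ^ (α k - 1) * u k))) := by
    refine Finset.sum_congr rfl fun α _ => ?_
    rw [Finset.mul_sum]
    refine Finset.sum_congr rfl fun k _ => ?_
    simp only [zero_mul, add_zero, smul_eq_mul, nsmul_eq_mul]
    ring
  rw [h1, h]
  refine Finset.sum_congr rfl fun β _ => ?_
  rw [Finset.sum_mul]
  refine Finset.sum_congr rfl fun k _ => ?_
  rw [← ubc_prod_erase n β k w]
  simp only [nsmul_eq_mul, Pi.add_apply, Pi.single_eq_same, Nat.add_sub_cancel]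
  push_cast
  ring

/-- A point with the same moduli making a linear form equal to the sum of its moduli. -/
theorem ubc_phase (n : ℕ) (b z : Fin n → ℂ) :
    ∃ u : Fin n → ℂ, (∀ k, ‖u k‖ = ‖z k‖) ∧ ∑ k, b k * u k = ((∑ k, ‖b k‖ * ‖z k‖ : ℝ) : ℂ) := by
  have : ∀ k, ∃ u : ℂ, ‖u‖ = ‖z k‖ ∧ b k * u = ((‖b k‖ * ‖z k‖ : ℝ) : ℂ) := by
    intro k
    by_cases h : b k = 0
    · exact ⟨z k, rfl, by simp [h]⟩
    · have hb : (‖b k‖ : ℂ) ≠ 0 := by simpa using h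
      refine ⟨(‖z k‖ : ℂ) * (‖b k‖ / b k), ?_, ?_⟩
      · simp [h]
      · push_cast; field_simp
  choose u h1 h2 using this
  exact ⟨u, h1, by push_cast; simp only [h2]; push_cast; rfl⟩

theorem ubc_card (n d : ℕ) (hn : 0 < n) :
    ((Finset.Nat.antidiagonalTuple n d).card : ℝ)
      ≤ (2 * Real.exp 1) ^ d * (1 + (n : ℝ) / ((d : ℝ) + 1)) ^ d := by
  have h1 : (Finset.Nat.antidiagonalTuple n d).card = (n + d - 1).choose d := by
    rw [← Finset.piAntidiag_univ_fin_eq_antidiagonalTuple, ← Finset.map_sym_eq_piAntidiag,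
      Finset.card_map, Finset.sym_univ, Finset.card_univ, Sym.card_sym_eq_choose, Fintype.card_fin]
  rw [h1]
  rcases Nat.eq_zero_or_pos d with rfl | hd
  · simp
  have hd1 : (1 : ℝ) ≤ d := by exact_mod_cast hd
  have hf : (0 : ℝ) < (d.factorial : ℝ) := by positivity
  have h2 : (((n + d - 1).choose d : ℕ) : ℝ) ≤ ((n + d - 1 : ℕ) : ℝ) ^ d / (d.factorial : ℝ) :=
    Nat.choose_le_pow_div d (n + d - 1)
  have h3 : ((n + d - 1 : ℕ) : ℝ) ≤ (n : ℝ) + d := by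
    have : n + d - 1 ≤ n + d := Nat.sub_le _ _
    exact_mod_cast this
  have h4 : (d : ℝ) ^ d / (d.factorial : ℝ) ≤ Real.exp d :=
    Real.pow_div_factorial_le_exp _ (by positivity) d
  have h5 : Real.exp (d : ℝ) = Real.exp 1 ^ d := by rw [← Real.exp_nat_mul]; simp
  have h6 : (n : ℝ) + d ≤ d * (2 * (1 + (n : ℝ) / ((d : ℝ) + 1))) := by
    have : (n : ℝ) ≤ 2 * d * ((n : ℝ) / ((d : ℝ) + 1)) := by
      rw [← mul_div_assoc, le_div_iff₀ (by positivity)]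
      have : (0 : ℝ) ≤ n := by positivity
      nlinarith
    nlinarith
  calc (((n + d - 1).choose d : ℕ) : ℝ) ≤ ((n + d - 1 : ℕ) : ℝ) ^ d / (d.factorial : ℝ) := h2
    _ ≤ (d * (2 * (1 + (n : ℝ) / ((d : ℝ) + 1)))) ^ d / (d.factorial : ℝ) := by
        gcongr; exact h3.trans h6
    _ = ((d : ℝ) ^ d / (d.factorial : ℝ)) * (2 * (1 + (n : ℝ) / ((d : ℝ) + 1))) ^ d := by
        rw [mul_pow]; ring
    _ ≤ Real.exp 1 ^ d * (2 * (1 + (n : ℝ) / ((d : ℝ) + 1))) ^ d := by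
        rw [← h5]; gcongr
    _ = _ := by simp only [mul_pow]; ring

theorem ubc_T_bound (p : ℝ≥0∞) (hp : 1 ≤ p) (hpt : p ≠ ∞) (n d : ℕ) (a : (Fin n → ℕ) → ℂ) (S : ℝ)
    (hS : ∀ w : Fin n → ℂ, pNorm p w < 1 → ‖mhEval n (d + 1) a w‖ ≤ S)
    (z : Fin n → ℂ) (hz : pNorm p z < 1) (β : Fin n → ℕ)
    (hβ : β ∈ Finset.Nat.antidiagonalTuple n d) :
    (∑ k, ‖((β k : ℂ) + 1) * a (β + Pi.single k 1)‖ * ‖z k‖) ^ p.toReal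
      ≤ (2 ^ (d + 1) * S) ^ p.toReal * Real.exp 1 ^ d * (Nat.multinomial Finset.univ β : ℝ) := by
  have hq1 : 1 ≤ p.toReal := by
    have := ENNReal.toReal_mono hpt hp
    simpa using this
  set q := p.toReal with hq
  have hq0 : 0 < q := by linarith
  have hsum : ∑ i, β i = d := Finset.Nat.mem_antidiagonalTuple.mp hβ
  obtain ⟨u, hu1, hu2⟩ := ubc_phase n (fun k => ((β k : ℂ) + 1) * a (β + Pi.single k 1)) z
  set T := ∑ k, ‖((β k : ℂ) + 1) * a (β + Pi.single k 1)‖ * ‖z k‖ with hT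
  have hT0 : 0 ≤ T := Finset.sum_nonneg fun _ _ => by positivity
  have hu : pNorm p u < 1 := by rw [ubc_pNorm_congr p u z hu1]; exact hz
  obtain ⟨pt, hpt1, hpt2⟩ := ubc_torus n (d + 1) (Nat.succ_pos d)
  let r : Fin n → ℝ := fun i => ((β i : ℝ) / d) ^ (1 / q)
  have hr0 : ∀ i, 0 ≤ r i := fun i => by positivity
  have hrq : ∀ i, r i ^ q = (β i : ℝ) / d := fun i => by
    simp only [r]
    rw [← Real.rpow_mul (by positivity), one_div_mul_cancel hq0.ne', Real.rpow_one]
  have hw : ∀ t, pNorm p (fun i => (r i : ℂ) * pt t i) ≤ 1 := by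
    intro t
    unfold pNorm
    rw [if_neg hpt]
    have : ∀ i, ‖(r i : ℂ) * pt t i‖ ^ p.toReal = (β i : ℝ) / d := by
      intro i
      rw [norm_mul, hpt1, mul_one, Complex.norm_real, Real.norm_of_nonneg (hr0 i), ← hq, hrq]
    simp only [this]
    rw [← Finset.sum_div]
    have h2 : ∑ i, (β i : ℝ) = d := by exact_mod_cast hsum
    rw [h2]
    exact Real.rpow_le_one (by positivity) (div_self_le_one _) (by positivity)
  have hc := ubc_coeff n (d + 1) (Nat.succ_pos d) pt hpt2 hpt1 (Finset.Nat.antidiagonalTuple n d)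
    (by
      intro γ hγ i
      have hg : ∑ i, γ i = d := Finset.Nat.mem_antidiagonalTuple.mp hγ
      have : γ i ≤ ∑ i, γ i := Finset.single_le_sum (fun _ _ => Nat.zero_le _) (Finset.mem_univ i)
      omega)
    (fun γ => (∑ k, ((γ k : ℂ) + 1) * a (γ + Pi.single k 1) * u k) * ∏ i, (r i : ℂ) ^ γ i)
    β hβ (2 ^ (d + 1) * S) (by
      intro t
      have := ubc_deriv p hp n d a S hS (fun i => (r i : ℂ) * pt t i) u (hw t) hu
      simpa only [mul_pow, Finset.prod_mul_distrib, mul_assoc] using this)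
  simp only [hu2] at hc
  rw [norm_mul, Complex.norm_real, Real.norm_of_nonneg hT0, norm_prod] at hc
  have hc2 : T * ∏ i, r i ^ β i ≤ 2 ^ (d + 1) * S := by
    refine le_of_eq_of_le ?_ hc
    congr 1
    refine Finset.prod_congr rfl fun i _ => ?_
    rw [norm_pow, Complex.norm_real, Real.norm_of_nonneg (hr0 i)]
  set K := 2 ^ (d + 1) * S with hK
  have hP0 : 0 ≤ ∏ i, r i ^ β i := Finset.prod_nonneg fun i _ => pow_nonneg (hr0 i) _
  have hK0 : 0 ≤ K := (mul_nonneg hT0 hP0).trans hc2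
  have h3 : T ^ q * ∏ i, ((β i : ℝ) / d) ^ β i ≤ K ^ q := by
    have := Real.rpow_le_rpow (mul_nonneg hT0 hP0) hc2 hq0.le
    rw [Real.mul_rpow hT0 hP0, ← Real.finsetProd_rpow _ _ (fun i _ => pow_nonneg (hr0 i) _)] at this
    refine le_of_eq_of_le ?_ this
    congr 1
    refine Finset.prod_congr rfl fun i _ => ?_
    rw [← hrq, ← Real.rpow_natCast, ← Real.rpow_natCast, ← Real.rpow_mul (hr0 i),
      ← Real.rpow_mul (hr0 i), mul_comm]
  have h4 : ∏ i, ((β i : ℝ) / d) ^ β i = (∏ i, (β i : ℝ) ^ β i) / (d : ℝ) ^ d := by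
    simp only [div_pow, Finset.prod_div_distrib]
    rw [Finset.prod_pow_eq_pow_sum, hsum]
  rw [h4] at h3
  have hdd : (0 : ℝ) < (d : ℝ) ^ d := by
    rcases Nat.eq_zero_or_pos d with h | h
    · rw [h]; simp
    · positivity
  have h5 : T ^ q * (∏ i, (β i : ℝ) ^ β i) ≤ K ^ q * (d : ℝ) ^ d := by
    rw [← mul_div_assoc, div_le_iff₀ hdd] at h3
    exact h3
  set M : ℝ := (Nat.multinomial Finset.univ β : ℝ) with hM
  have hM0 : 0 ≤ M := by positivity
  have h6 : (d.factorial : ℝ) ≤ (∏ i, (β i : ℝ) ^ β i) * M := by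
    have := Nat.multinomial_spec Finset.univ β
    rw [hsum] at this
    rw [← this]
    push_cast
    gcongr with i _
    exact_mod_cast Nat.factorial_le_pow (β i)
  have h7 : (d : ℝ) ^ d ≤ Real.exp 1 ^ d * (d.factorial : ℝ) := by
    have h4 : (d : ℝ) ^ d / (d.factorial : ℝ) ≤ Real.exp d :=
      Real.pow_div_factorial_le_exp _ (by positivity) d
    have h5 : Real.exp (d : ℝ) = Real.exp 1 ^ d := by rw [← Real.exp_nat_mul]; simp
    rwa [h5, div_le_iff₀ (by positivity)] at h4
  have hf : (0 : ℝ) < (d.factorial : ℝ) := by positivity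
  have hTq : 0 ≤ T ^ q := by positivity
  have hKq : 0 ≤ K ^ q := by positivity
  have h8 : T ^ q * (d.factorial : ℝ) ≤ (K ^ q * Real.exp 1 ^ d * M) * (d.factorial : ℝ) := by
    calc T ^ q * (d.factorial : ℝ) ≤ T ^ q * ((∏ i, (β i : ℝ) ^ β i) * M) := by gcongr
      _ = (T ^ q * (∏ i, (β i : ℝ) ^ β i)) * M := by ring
      _ ≤ (K ^ q * (d : ℝ) ^ d) * M := by gcongr
      _ ≤ (K ^ q * (Real.exp 1 ^ d * (d.factorial : ℝ))) * M := by gcongr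
      _ = _ := by ring
  exact le_of_mul_le_mul_right h8 hf

theorem ubc_small (p : ℝ≥0∞) (hp : 1 ≤ p) (hpt : p ≠ ∞) (n d : ℕ) (a : (Fin n → ℕ) → ℂ) (S : ℝ)
    (hS : ∀ w : Fin n → ℂ, pNorm p w < 1 → ‖mhEval n (d + 1) a w‖ ≤ S) (hS0 : 0 ≤ S)
    (z : Fin n → ℂ) (hz : pNorm p z < 1) :
    ∑ β ∈ Finset.Nat.antidiagonalTuple n d,
        (∑ k, ‖((β k : ℂ) + 1) * a (β + Pi.single k 1)‖ * ‖z k‖) * ∏ i, ‖z i‖ ^ β i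
      ≤ 2 ^ (d + 1) * Real.exp 1 ^ d *
        ((Finset.Nat.antidiagonalTuple n d).card : ℝ) ^ (1 - 1 / p.toReal) * S := by
  have hq1 : 1 ≤ p.toReal := by
    have := ENNReal.toReal_mono hpt hp
    simpa using this
  have hT := ubc_T_bound p hp hpt n d a S hS z hz
  have hzq : ∑ i, ‖z i‖ ^ p.toReal ≤ 1 := by
    unfold pNorm at hz
    rw [if_neg hpt] at hz
    by_contra hcon
    push Not at hcon
    have := Real.one_le_rpow hcon.le (show 0 ≤ 1 / p.toReal by positivity)
    linarith
  set q := p.toReal with hq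
  have hq0 : 0 < q := by linarith
  set A := Finset.Nat.antidiagonalTuple n d with hA
  set T : (Fin n → ℕ) → ℝ :=
    fun β => ∑ k, ‖((β k : ℂ) + 1) * a (β + Pi.single k 1)‖ * ‖z k‖ with hTd
  have hT0 : ∀ β, 0 ≤ T β := fun β => Finset.sum_nonneg fun _ _ => by positivity
  have hP0 : ∀ β : Fin n → ℕ, 0 ≤ ∏ i, ‖z i‖ ^ β i :=
    fun β => Finset.prod_nonneg fun _ _ => by positivity
  change ∑ β ∈ A, T β * ∏ i, ‖z i‖ ^ β i ≤ _
  set N : ℝ := (A.card : ℝ) with hN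
  have hN0 : 0 ≤ N := by positivity
  have hK0 : 0 ≤ 2 ^ (d + 1) * S := by positivity
  set K := 2 ^ (d + 1) * S with hK
  have hKq : 0 ≤ K ^ q := by positivity
  have he : 1 ≤ Real.exp 1 ^ d := one_le_pow₀ (Real.one_le_exp (by norm_num))
  have hmulti : ∑ β ∈ A, (Nat.multinomial Finset.univ β : ℝ) * (∏ i, ‖z i‖ ^ β i) ^ q ≤ 1 := by
    have h1 := Finset.sum_pow_eq_sum_piAntidiag (Finset.univ : Finset (Fin n))
      (fun i => ‖z i‖ ^ q) d
    rw [Finset.piAntidiag_univ_fin_eq_antidiagonalTuple] at h1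
    have h2 : ∀ β : Fin n → ℕ, (∏ i, ‖z i‖ ^ β i) ^ q = ∏ i, (‖z i‖ ^ q) ^ β i := by
      intro β
      rw [← Real.finsetProd_rpow _ _ (fun i _ => by positivity)]
      refine Finset.prod_congr rfl fun i _ => ?_
      rw [← Real.rpow_natCast, ← Real.rpow_natCast, ← Real.rpow_mul (norm_nonneg _),
        ← Real.rpow_mul (norm_nonneg _), mul_comm]
    simp only [h2]
    rw [← h1]
    exact pow_le_one₀ (Finset.sum_nonneg fun _ _ => by positivity) hzq
  have hmain : (∑ β ∈ A, T β * ∏ i, ‖z i‖ ^ β i) ^ q ≤ N ^ (q - 1) * (K ^ q * Real.exp 1 ^ d) := by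
    refine (Real.rpow_sum_le_const_mul_sum_rpow_of_nonneg A hq1
      (fun β _ => mul_nonneg (hT0 β) (hP0 β))).trans ?_
    gcongr
    calc ∑ β ∈ A, (T β * ∏ i, ‖z i‖ ^ β i) ^ q
        ≤ ∑ β ∈ A, (K ^ q * Real.exp 1 ^ d) *
          ((Nat.multinomial Finset.univ β : ℝ) * (∏ i, ‖z i‖ ^ β i) ^ q) := by
          refine Finset.sum_le_sum fun β hβ => ?_
          rw [Real.mul_rpow (hT0 β) (hP0 β), ← mul_assoc]
          exact mul_le_mul_of_nonneg_right (hT β hβ) (Real.rpow_nonneg (hP0 β) _)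
      _ ≤ (K ^ q * Real.exp 1 ^ d) * 1 := by
          rw [← Finset.mul_sum]
          gcongr
      _ = _ := mul_one _
  have hfin : (2 ^ (d + 1) * Real.exp 1 ^ d * N ^ (1 - 1 / q) * S) ^ q
      = N ^ (q - 1) * (K ^ q * (Real.exp 1 ^ d) ^ q) := by
    have e1 : 2 ^ (d + 1) * Real.exp 1 ^ d * N ^ (1 - 1 / q) * S
        = N ^ (1 - 1 / q) * (K * Real.exp 1 ^ d) := by rw [hK]; ring
    rw [e1, Real.mul_rpow (by positivity) (by positivity), Real.mul_rpow hK0 (by positivity),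
      ← Real.rpow_mul hN0]
    congr 2
    field_simp
  refine (Real.rpow_le_rpow_iff (Finset.sum_nonneg fun β _ => mul_nonneg (hT0 β) (hP0 β))
    (by positivity) hq0).mp ?_
  rw [hfin]
  refine hmain.trans ?_
  gcongr
  exact Real.self_le_rpow_of_one_le he hq1

theorem ubc_large (p : ℝ≥0∞) (hp : 1 ≤ p) (n d : ℕ) (a : (Fin n → ℕ) → ℂ) (S : ℝ)
    (hS : ∀ w : Fin n → ℂ, pNorm p w < 1 → ‖mhEval n (d + 1) a w‖ ≤ S)
    (z : Fin n → ℂ) (hz : pNorm p z < 1) :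
    ∑ β ∈ Finset.Nat.antidiagonalTuple n d,
        (∑ k, ‖((β k : ℂ) + 1) * a (β + Pi.single k 1)‖ * ‖z k‖) * ∏ i, ‖z i‖ ^ β i
      ≤ 4 * 2 ^ d * 2 ^ (d + 1) * √((Finset.Nat.antidiagonalTuple n d).card : ℝ) * S := by
  obtain ⟨pt, hpt1, hpt2⟩ := ubc_torus n (2 * d + 1) (Nat.succ_pos _)
  set A := Finset.Nat.antidiagonalTuple n d with hA
  let c : Fin n → (Fin n → ℕ) → ℂ := fun k β =>
    ((β k : ℂ) + 1) * a (β + Pi.single k 1) * z k * ∏ i, z i ^ β i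
  have hL : ∑ β ∈ A,
        (∑ k, ‖((β k : ℂ) + 1) * a (β + Pi.single k 1)‖ * ‖z k‖) * ∏ i, ‖z i‖ ^ β i
      = ∑ k, ∑ β ∈ A, ‖c k β‖ := by
    rw [Finset.sum_comm]
    refine Finset.sum_congr rfl fun β _ => ?_
    rw [Finset.sum_mul]
    refine Finset.sum_congr rfl fun k _ => ?_
    simp only [c, norm_mul, norm_prod, norm_pow]
  rw [hL]
  set Nn : ℝ := (((2 * d + 1) ^ n : ℕ) : ℝ) with hNn
  have hNn0 : 0 < Nn := by positivity
  set N : ℝ := (A.card : ℝ) with hN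
  have hcs : ∀ k, ∑ β ∈ A, ‖c k β‖ ≤ √N * √(∑ β ∈ A, ‖c k β‖ ^ 2) := by
    intro k
    rw [← Real.sqrt_mul (by positivity)]
    refine Real.le_sqrt_of_sq_le ?_
    exact sq_sum_le_card_mul_sum_sq
  have hkh := fun k => ubc_khinchine n d (2 * d + 1) (by omega) pt hpt2 (c k)
  have ht : ∀ t, ∑ k, ‖∑ β ∈ A, c k β * ∏ i, pt t i ^ β i‖ ≤ 2 ^ (d + 1) * S := by
    intro t
    have hw : pNorm p (fun i => z i * pt t i) ≤ 1 := by
      rw [ubc_pNorm_congr p (fun i => z i * pt t i) z (fun i => by simp [hpt1])]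
      exact hz.le
    obtain ⟨u, hu1, hu2⟩ := ubc_phase n (fun k => ∑ β ∈ A, ((β k : ℂ) + 1) *
      a (β + Pi.single k 1) * ∏ i, (z i * pt t i) ^ β i) z
    have hu : pNorm p u < 1 := by rw [ubc_pNorm_congr p u z hu1]; exact hz
    have hd := ubc_deriv p hp n d a S hS (fun i => z i * pt t i) u hw hu
    have e1 : ∑ β ∈ A, (∑ k, ((β k : ℂ) + 1) * a (β + Pi.single k 1) * u k) *
          ∏ i, (z i * pt t i) ^ β i
        = ∑ k, (∑ β ∈ A, ((β k : ℂ) + 1) * a (β + Pi.single k 1) *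
          ∏ i, (z i * pt t i) ^ β i) * u k := by
      simp only [Finset.sum_mul]
      rw [Finset.sum_comm]
      refine Finset.sum_congr rfl fun k _ => Finset.sum_congr rfl fun β _ => ?_
      ring
    rw [← hA] at hd
    rw [e1, hu2, Complex.norm_real] at hd
    refine le_trans ?_ ((le_abs_self _).trans hd)
    refine Finset.sum_le_sum fun k _ => ?_
    rw [← norm_mul, Finset.sum_mul]
    refine le_of_eq (congrArg (fun x : ℂ => ‖x‖) ?_)
    refine Finset.sum_congr rfl fun β _ => ?_
    simp only [c, mul_pow, Finset.prod_mul_distrib]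
    ring
  have hfinal : Nn * ∑ k, ∑ β ∈ A, ‖c k β‖
      ≤ Nn * (4 * 2 ^ d * 2 ^ (d + 1) * √N * S) := by
    calc Nn * ∑ k, ∑ β ∈ A, ‖c k β‖
        ≤ Nn * ∑ k, √N * √(∑ β ∈ A, ‖c k β‖ ^ 2) := by
          gcongr with k _
          exact hcs k
      _ = √N * ∑ k, Nn * √(∑ β ∈ A, ‖c k β‖ ^ 2) := by
          simp only [Finset.mul_sum]
          refine Finset.sum_congr rfl fun k _ => ?_
          ring
      _ ≤ √N * ∑ k, 4 * 2 ^ d * ∑ t, ‖∑ β ∈ A, c k β * ∏ i, pt t i ^ β i‖ := by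
          refine mul_le_mul_of_nonneg_left (Finset.sum_le_sum fun k _ => hkh k) (by positivity)
      _ = √N * (4 * 2 ^ d * ∑ t, ∑ k, ‖∑ β ∈ A, c k β * ∏ i, pt t i ^ β i‖) := by
          rw [← Finset.mul_sum, Finset.sum_comm]
      _ ≤ √N * (4 * 2 ^ d * (Nn * (2 ^ (d + 1) * S))) := by
          gcongr
          refine (Finset.sum_le_card_nsmul _ _ _ (fun t _ => ht t)).trans ?_
          simp [hNn]
      _ = _ := by ring
  exact le_of_mul_le_mul_left hfinal hNn0

theorem ubc_combine (n d : ℕ) (hn : 0 < n) (B C θ S X : ℝ) (hB : 0 ≤ B) (hS : 0 ≤ S)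
    (hθ0 : 0 ≤ θ) (hθ1 : θ ≤ 1) (hBC : B * (2 * Real.exp 1) ^ d ≤ C ^ (d + 1))
    (hX : X ≤ B * ((Finset.Nat.antidiagonalTuple n d).card : ℝ) ^ θ * S) :
    X ≤ C ^ (d + 1) * (1 + (n : ℝ) / ((d : ℝ) + 1)) ^ ((d : ℝ) * θ) * S := by
  have hc := ubc_card n d hn
  have he : 1 ≤ (2 * Real.exp 1) ^ d :=
    one_le_pow₀ (by have := Real.one_le_exp (show (0:ℝ) ≤ 1 by norm_num); linarith)
  have hy : (0:ℝ) ≤ 1 + (n : ℝ) / ((d : ℝ) + 1) := by positivity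
  have h1 : ((Finset.Nat.antidiagonalTuple n d).card : ℝ) ^ θ
      ≤ (2 * Real.exp 1) ^ d * (1 + (n : ℝ) / ((d : ℝ) + 1)) ^ ((d : ℝ) * θ) := by
    calc ((Finset.Nat.antidiagonalTuple n d).card : ℝ) ^ θ
        ≤ ((2 * Real.exp 1) ^ d * (1 + (n : ℝ) / ((d : ℝ) + 1)) ^ d) ^ θ := by gcongr
      _ = ((2 * Real.exp 1) ^ d) ^ θ * (1 + (n : ℝ) / ((d : ℝ) + 1)) ^ ((d : ℝ) * θ) := by
          rw [Real.mul_rpow (by positivity) (by positivity), Real.rpow_mul hy, Real.rpow_natCast]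
      _ ≤ _ := by
          gcongr
          exact Real.rpow_le_self_of_one_le he hθ1
  calc X ≤ B * ((Finset.Nat.antidiagonalTuple n d).card : ℝ) ^ θ * S := hX
    _ ≤ B * ((2 * Real.exp 1) ^ d * (1 + (n : ℝ) / ((d : ℝ) + 1)) ^ ((d : ℝ) * θ)) * S := by
        gcongr
    _ = (B * (2 * Real.exp 1) ^ d) * (1 + (n : ℝ) / ((d : ℝ) + 1)) ^ ((d : ℝ) * θ) * S := by ring
    _ ≤ _ := by gcongr

/-- The unconditional basis constant of the monomials in `𝒫(^m ℓ_p^n)` is at most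
`C^m (1 + n/m)^{(m-1)(1 - 1/min(p,2))}` for an absolute constant `C ≥ 1`: for every
`m`-homogeneous polynomial `∑ a_α z^α`, every choice of scalars `|ε_α| ≤ 1`, and every
`z` in the open unit ball of `ℓ_p^n`, `|∑ ε_α a_α z^α|` is bounded by this constant
times `sup_{w ∈ B} |∑ a_α w^α|`. -/
theorem unconditional_basis_constant_polynomials :
    ∃ C : ℝ, 1 ≤ C ∧ ∀ (p : ℝ≥0∞), 1 ≤ p → ∀ (m n : ℕ), 0 < m → 0 < n →
      ∀ (a ε : (Fin n → ℕ) → ℂ), (∀ α, ‖ε α‖ ≤ 1) →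
        ∀ z : Fin n → ℂ, pNorm p z < 1 →
          ‖mhEval n m (fun α => ε α * a α) z‖
            ≤ C ^ m *
                (1 + (n : ℝ) / (m : ℝ)) ^ (((m : ℝ) - 1) * (1 - 1 / (min p 2).toReal)) *
                sSup {x : ℝ | ∃ w : Fin n → ℂ, pNorm p w < 1 ∧ x = ‖mhEval n m a w‖} := by
  have he1 : 1 ≤ Real.exp 1 := Real.one_le_exp (by norm_num)
  refine ⟨8 * Real.exp 1 ^ 2, by nlinarith, ?_⟩
  intro p hp m n hm hn a ε hε z hz
  obtain ⟨d, rfl⟩ : ∃ d, m = d + 1 := ⟨m - 1, by omega⟩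
  set S := sSup {x : ℝ | ∃ w : Fin n → ℂ, pNorm p w < 1 ∧ x = ‖mhEval n (d + 1) a w‖} with hSdef
  have hS : ∀ w : Fin n → ℂ, pNorm p w < 1 → ‖mhEval n (d + 1) a w‖ ≤ S := fun w hw =>
    le_csSup (ubc_bdd p hp n (d + 1) a) ⟨w, hw, rfl⟩
  have hS0 : 0 ≤ S := (norm_nonneg _).trans (hS z hz)
  have hX1 : ‖mhEval n (d + 1) (fun α => ε α * a α) z‖
      ≤ ∑ α ∈ Finset.Nat.antidiagonalTuple n (d + 1), ‖a α‖ * ∏ i, ‖z i‖ ^ α i := by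
    unfold mhEval
    refine (norm_sum_le _ _).trans (Finset.sum_le_sum fun α _ => ?_)
    rw [norm_mul, norm_mul, norm_prod]
    simp only [norm_pow]
    gcongr
    exact mul_le_of_le_one_left (norm_nonneg _) (hε α)
  have hX2 := ubc_sum_identity n d a z
  set X := ∑ α ∈ Finset.Nat.antidiagonalTuple n (d + 1), ‖a α‖ * ∏ i, ‖z i‖ ^ α i with hX
  have hX0 : 0 ≤ X := Finset.sum_nonneg fun _ _ => by positivity
  have hX3 : X ≤ ((d : ℝ) + 1) * X := by
    have : (0:ℝ) ≤ d := by positivity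
    nlinarith
  rw [hX2] at hX3
  have e1 : ((d + 1 : ℕ) : ℝ) - 1 = d := by push_cast; ring
  have e2 : ((d + 1 : ℕ) : ℝ) = (d : ℝ) + 1 := by push_cast; ring
  rw [e1, e2]
  refine hX1.trans ?_
  rcases le_total p 2 with h2 | h2
  · rw [min_eq_left h2]
    have hpt : p ≠ ∞ := ne_top_of_le_ne_top (by norm_num) h2
    have hq1 : 1 ≤ p.toReal := by
      have := ENNReal.toReal_mono hpt hp
      simpa using this
    refine ubc_combine n d hn (2 ^ (d + 1) * Real.exp 1 ^ d) _ (1 - 1 / p.toReal) S X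
      (by positivity) hS0 ?_ ?_ ?_ (hX3.trans (ubc_small p hp hpt n d a S hS hS0 z hz))
    · have : 1 / p.toReal ≤ 1 := by rw [div_le_one (by linarith)]; exact hq1
      linarith
    · have : 0 ≤ 1 / p.toReal := by positivity
      linarith
    · have : 2 ^ (d + 1) * Real.exp 1 ^ d * (2 * Real.exp 1) ^ d
          = 2 * (4 * Real.exp 1 ^ 2) ^ d := by
        rw [pow_succ, show (4 : ℝ) = 2 * 2 by norm_num]
        simp only [mul_pow]; ring
      rw [this, pow_succ' (8 * Real.exp 1 ^ 2) d]
      have h3 : (4 * Real.exp 1 ^ 2) ^ d ≤ (8 * Real.exp 1 ^ 2) ^ d := by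
        refine pow_le_pow_left₀ (by positivity) ?_ d
        nlinarith
      exact mul_le_mul (by nlinarith) h3 (by positivity) (by positivity)
  · rw [min_eq_right h2]
    have h22 : (2 : ℝ≥0∞).toReal = 2 := by simp
    rw [h22]
    refine ubc_combine n d hn (4 * 2 ^ d * 2 ^ (d + 1)) _ (1 - 1 / 2) S X
      (by positivity) hS0 (by norm_num) (by norm_num) ?_ ?_
    · have : 4 * 2 ^ d * 2 ^ (d + 1) * (2 * Real.exp 1) ^ d
          = 8 * (8 * Real.exp 1) ^ d := by
        rw [pow_succ, show (8 : ℝ) = 2 * 2 * 2 by norm_num]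
        simp only [mul_pow]; ring
      rw [this, pow_succ' (8 * Real.exp 1 ^ 2) d]
      have h3 : (8 * Real.exp 1) ^ d ≤ (8 * Real.exp 1 ^ 2) ^ d := by
        refine pow_le_pow_left₀ (by positivity) ?_ d
        nlinarith
      exact mul_le_mul (by nlinarith) h3 (by positivity) (by positivity)
    · have := hX3.trans (ubc_large p hp n d a S hS z hz)
      rw [Real.sqrt_eq_rpow] at this
      norm_num at this ⊢
      exact this
end
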